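/- arXiv:2108.07551 — 2 statements merged into one kernel-verified Lean document; each statement's English description precedes it below -/
import Mathlib

section
/- Let R and S be minimal separators of a finite simple graph G. Then R crosses S if and only if S crosses R. -/
/-- A tree-decomposition of a graph `G` indexed by nodes of type `ι`. -/
structure TreeDecomp {V : Type} (G : SimpleGraph V) (ι : Type) where
  tree : SimpleGraph ι
  isTree : tree.IsTree
  bag : ι → Finset V
  bags_cover : ∀ v : V, ∃ i : ι, v ∈ bag i
  edges_covered : ∀ ⦃u v : V⦄, G.Adj u v → ∃ i : ι, u ∈ bag i ∧ v ∈ bag i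
  bags_connected : ∀ v : V, (tree.induce {i : ι | v ∈ bag i}).Connected

/-- The treewidth of `G`: the smallest `k` such that `G` has a tree-decomposition
all of whose bags have at most `k + 1` vertices (i.e. of width at most `k`). -/
noncomputable def treewidth {V : Type} (G : SimpleGraph V) : ℕ :=
  sInf { k : ℕ | ∃ (ι : Type) (td : TreeDecomp G ι), ∀ i : ι, (td.bag i).card ≤ k + 1 }

/-- The neighborhood `N_G(C)` of a vertex set `C`. -/
def nbhd {V : Type} (G : SimpleGraph V) (C : Set V) : Set V :=
  {v : V | v ∉ C ∧ ∃ u ∈ C, G.Adj u v}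

/-- `S` separates `a` from `b` in `G`: `a, b ∉ S` and every walk from `a` to `b` meets `S`
(so `a` and `b` lie in distinct components of `G` minus `S`). -/
def Separates {V : Type} (G : SimpleGraph V) (S : Set V) (a b : V) : Prop :=
  a ∉ S ∧ b ∉ S ∧ ∀ p : G.Walk a b, ∃ v ∈ p.support, v ∈ S

/-- `C` is a connected component of `G` minus `S`. -/
def IsCompOf {V : Type} (G : SimpleGraph V) (S : Set V) (C : Set V) : Prop :=
  C.Nonempty ∧ Disjoint C S ∧ (G.induce C).Connected ∧
    ∀ D : Set V, C ⊆ D → Disjoint D S → (G.induce D).Connected → D = C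

/-- `S` is a separator of `G`: `G` minus `S` has more than one connected component. -/
def IsSeparator {V : Type} (G : SimpleGraph V) (S : Set V) : Prop :=
  ∃ C D : Set V, IsCompOf G S C ∧ IsCompOf G S D ∧ C ≠ D

/-- `C` is a full component of `S` in `G`. -/
def IsFullCompOf {V : Type} (G : SimpleGraph V) (S : Set V) (C : Set V) : Prop :=
  IsCompOf G S C ∧ nbhd G C = S

/-- `S` is a minimal separator of `G`: it has at least two full components. -/
def IsMinSep {V : Type} (G : SimpleGraph V) (S : Set V) : Prop :=
  ∃ C D : Set V, IsFullCompOf G S C ∧ IsFullCompOf G S D ∧ C ≠ D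

/-- `R` crosses `S` if `R` separates some pair of vertices of `S`. -/
def Crosses {V : Type} (G : SimpleGraph V) (R S : Set V) : Prop :=
  ∃ a b : V, a ∈ S ∧ b ∈ S ∧ Separates G R a b

/-- `G` is chordal: every cycle with more than 3 vertices has a chord. -/
def IsChordal {V : Type} (G : SimpleGraph V) : Prop :=
  ∀ ⦃v : V⦄ (c : G.Walk v v), c.IsCycle → 3 < c.length →
    ∃ u w : V, u ∈ c.support ∧ w ∈ c.support ∧ G.Adj u w ∧ s(u, w) ∉ c.edges

/-- `H` is a triangulation of `G`. -/
def IsTriangulationOf {V : Type} (H G : SimpleGraph V) : Prop :=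
  IsChordal H ∧ G ≤ H

/-- `H` is a minimal triangulation of `G`. -/
def IsMinimalTriangulationOf {V : Type} (H G : SimpleGraph V) : Prop :=
  IsTriangulationOf H G ∧ ∀ H' : SimpleGraph V, IsTriangulationOf H' G → H' ≤ H → H' = H

/-- `K(S)`: the graph on the same vertex type whose edges join all pairs of
distinct vertices of `S`. -/
def completeOn {V : Type} (S : Set V) : SimpleGraph V :=
  SimpleGraph.fromRel (fun a b => a ∈ S ∧ b ∈ S)

/-- `s` is a maximal clique of `G`. -/
def IsMaximalClique {V : Type} (G : SimpleGraph V) (s : Set V) : Prop :=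
  G.IsClique s ∧ ∀ t : Set V, G.IsClique t → s ⊆ t → s = t

/-- `fill G td`: fill every bag of the tree-decomposition `td` into a clique. -/
def fill {V ι : Type} (G : SimpleGraph V) (td : TreeDecomp G ι) : SimpleGraph V :=
  G ⊔ SimpleGraph.fromRel (fun a b => ∃ i : ι, a ∈ td.bag i ∧ b ∈ td.bag i)

/-- The nodes of the maximal subtree `T(i,j)` of the tree containing `i` but not `j`
(for adjacent `i`, `j`): the nodes reachable from `i` after deleting the edge `{i, j}`. -/
def sideNodes {V ι : Type} {G : SimpleGraph V} (td : TreeDecomp G ι) (i j : ι) : Set ι :=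
  {t : ι | (td.tree.deleteEdges {s(i, j)}).Reachable i t}

/-- `V(i,j)`: the union of the bags of nodes in `T(i,j)`, with the vertices of the
bag of `j` removed. -/
def sideVerts {V ι : Type} {G : SimpleGraph V} (td : TreeDecomp G ι) (i j : ι) : Set V :=
  (⋃ t ∈ sideNodes td i j, (td.bag t : Set V)) \ (td.bag j : Set V)

/-- A perfect elimination order of `G`. -/
def IsPerfectElimOrder {V : Type} [Fintype V] (G : SimpleGraph V)
    (e : Fin (Fintype.card V) ≃ V) : Prop :=
  ∀ i : Fin (Fintype.card V),
    G.IsClique {u : V | G.Adj (e i) u ∧ ∃ j : Fin (Fintype.card V), i < j ∧ e j = u}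

/-- `H` is a minor of `G`, via the branch-set (minor model) characterization. -/
def IsMinorOf {W V : Type} (H : SimpleGraph W) (G : SimpleGraph V) : Prop :=
  ∃ B : W → Set V,
    (∀ w : W, (B w).Nonempty) ∧
    (∀ w : W, (G.induce (B w)).Connected) ∧
    (Pairwise fun w₁ w₂ : W => Disjoint (B w₁) (B w₂)) ∧
    ∀ ⦃w₁ w₂ : W⦄, H.Adj w₁ w₂ → ∃ a ∈ B w₁, ∃ b ∈ B w₂, G.Adj a b

/-- There is a clique minor of `G` minus `C` rooted on `R`, given by branch sets
`B v ∋ v` for `v ∈ R`: disjoint from `C`, pairwise disjoint, each connected, with an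
edge of `G` between every two of them. -/
def HasCliqueMinorRootedAvoiding {V : Type} (G : SimpleGraph V) (R C : Set V) : Prop :=
  ∃ B : R → Set V,
    (∀ v : R, (v : V) ∈ B v) ∧
    (∀ v : R, Disjoint (B v) C) ∧
    (∀ v : R, (G.induce (B v)).Connected) ∧
    (∀ u v : R, u ≠ v → Disjoint (B u) (B v)) ∧
    (∀ u v : R, u ≠ v → ∃ a ∈ B u, ∃ b ∈ B v, G.Adj a b)

/-- `S` is a minor-safe separator of `G`: for every component `C` of `G` minus `S`,
there is a clique minor of `G` minus `C` rooted on `N_G(C)`. -/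
def MinorSafe {V : Type} (G : SimpleGraph V) (S : Set V) : Prop :=
  ∀ C : Set V, IsCompOf G S C → HasCliqueMinorRootedAvoiding G (nbhd G C) C

/-!
Suppose `R` separates two vertices of `S`. Both have neighbors in every full component of `S`, so
each full component together with these two vertices is connected, and therefore contains a vertex
of `R`. Vertices of `R` in two distinct full components of `S` are separated by `S`.
-/

theorem preconnected_induce_insert_of_adj {V : Type*} {G : SimpleGraph V} {C : Set V} {u v : V}
    (hC : (G.induce C).Preconnected) (hu : u ∈ C) (huv : G.Adj u v) :
    (G.induce (insert v C)).Preconnected := by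
  rw [← Set.singleton_union]
  exact (SimpleGraph.connected_induce_union .of_subsingleton hC
    (Set.mem_singleton v) hu huv.symm).preconnected

section Crossing

variable {V : Type} {G : SimpleGraph V} {R S C D : Set V} {a b : V}

theorem IsCompOf.subset_of_preconnected (hC : IsCompOf G S C)
    (hD : (G.induce D).Preconnected) (hDS : Disjoint D S) (hCD : (C ∩ D).Nonempty) : D ⊆ C := by
  obtain ⟨-, hCS, hCconn, hmax⟩ := hC
  have hunion : C ∪ D = C := hmax (C ∪ D) Set.subset_union_left
    (Set.disjoint_union_left.2 ⟨hCS, hDS⟩)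
    (SimpleGraph.induce_union_connected hCconn.preconnected hD hCD)
  exact Set.union_eq_left.1 hunion

theorem IsCompOf.disjoint_of_ne (hC : IsCompOf G S C) (hD : IsCompOf G S D) (hne : C ≠ D) :
    Disjoint C D := by
  by_contra hmeet
  have hCD : (C ∩ D).Nonempty := Set.not_disjoint_iff_nonempty_inter.1 hmeet
  exact hne <| Set.Subset.antisymm
    (hD.subset_of_preconnected hC.2.2.1.preconnected hC.2.1 (Set.inter_comm C D ▸ hCD))
    (hC.subset_of_preconnected hD.2.2.1.preconnected hD.2.1 hCD)

theorem IsCompOf.separates (hC : IsCompOf G S C) (ha : a ∈ C) (hbC : b ∉ C) (hbS : b ∉ S) :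
    Separates G S a b := by
  refine ⟨Set.disjoint_left.1 hC.2.1 ha, hbS, fun p => ?_⟩
  by_contra! havoid
  have hsupport : {v | v ∈ p.support} ⊆ C :=
    hC.subset_of_preconnected p.connected_induce_support.preconnected
      (Set.disjoint_left.2 havoid) ⟨a, ha, p.start_mem_support⟩
  exact hbC (hsupport p.end_mem_support)

theorem Crosses.of_inter_nonempty (hC : IsCompOf G S C) (hD : IsCompOf G S D) (hne : C ≠ D)
    (hCR : (C ∩ R).Nonempty) (hDR : (D ∩ R).Nonempty) : Crosses G S R := by
  obtain ⟨a, haC, haR⟩ := hCR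
  obtain ⟨b, hbD, hbR⟩ := hDR
  have hbC : b ∉ C := Set.disjoint_right.1 (hC.disjoint_of_ne hD hne) hbD
  have hbS : b ∉ S := Set.disjoint_left.1 hD.2.1 hbD
  exact ⟨a, b, haR, hbR, hC.separates haC hbC hbS⟩

theorem Separates.inter_nonempty_of_preconnected (h : Separates G R a b)
    (hD : (G.induce D).Preconnected) (ha : a ∈ D) (hb : b ∈ D) : (D ∩ R).Nonempty := by
  rw [SimpleGraph.preconnected_induce_iff,
    SimpleGraph.Subgraph.preconnected_iff_forall_exists_walk_subgraph] at hD
  obtain ⟨p, hpD⟩ := hD ha hb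
  obtain ⟨v, hvp, hvR⟩ := h.2.2 p
  exact ⟨v, hpD.1 (p.mem_verts_toSubgraph.2 hvp), hvR⟩

theorem Separates.inter_nonempty_of_mem_nbhd (h : Separates G R a b)
    (hC : (G.induce C).Preconnected) (ha : a ∈ nbhd G C) (hb : b ∈ nbhd G C) :
    (C ∩ R).Nonempty := by
  obtain ⟨-, u, hu, hua⟩ := ha
  obtain ⟨-, w, hw, hwb⟩ := hb
  have hconn : (G.induce (insert b (insert a C))).Preconnected :=
    preconnected_induce_insert_of_adj (preconnected_induce_insert_of_adj hC hu hua)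
      (Set.mem_insert_of_mem a hw) hwb
  have hmeet : (insert b (insert a C) ∩ R).Nonempty :=
    h.inter_nonempty_of_preconnected hconn (by simp) (by simp)
  rwa [Set.insert_inter_of_notMem h.2.1, Set.insert_inter_of_notMem h.1] at hmeet

theorem Crosses.inter_nonempty_of_isFullCompOf (h : Crosses G R S) (hC : IsFullCompOf G S C) :
    (C ∩ R).Nonempty := by
  obtain ⟨a, b, ha, hb, hab⟩ := h
  obtain ⟨hcomp, rfl⟩ := hC
  exact hab.inter_nonempty_of_mem_nbhd hcomp.2.2.1.preconnected ha hb

theorem Crosses.symm_of_isMinSep (h : Crosses G R S) (hS : IsMinSep G S) : Crosses G S R := by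
  obtain ⟨C, D, hC, hD, hne⟩ := hS
  exact .of_inter_nonempty hC.1 hD.1 hne
    (h.inter_nonempty_of_isFullCompOf hC) (h.inter_nonempty_of_isFullCompOf hD)

end Crossing

theorem crosses_comm_of_minSep_general {V : Type} (G : SimpleGraph V) (R S : Set V)
    (hR : IsMinSep G R) (hS : IsMinSep G S) : Crosses G R S ↔ Crosses G S R :=
  ⟨fun h => h.symm_of_isMinSep hS, fun h => h.symm_of_isMinSep hR⟩

/-- for minimal separators `R` and `S`, `R` crosses `S` iff `S`
crosses `R`. -/
theorem crosses_comm_of_minSep {V : Type} [Fintype V] (G : SimpleGraph V)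
    (R S : Set V) (hR : IsMinSep G R) (hS : IsMinSep G S) :
    Crosses G R S ↔ Crosses G S R := by
  exact crosses_comm_of_minSep_general G R S hR hS
end

section
/- For every finite simple graph G, the treewidth tw(G) equals the smallest integer k such that there is a minimal triangulation H of G whose clique number ω(H) equals k + 1. -/
/-!
Filling the bags of a tree-decomposition produces a chordal graph: once the tree is rooted, the
nodes whose bag contains a given vertex form a subtree with a root, and on a cycle the two
neighbours of a vertex with deepest root both lie in the bag of that root. The Helly property of
subtrees puts every clique of the filled graph into a bag. Conversely, a chordal graph that is not
complete is split along a clique, namely the neighbourhood of a component left after deleting some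
`v` and its neighbours; that clique lies in a bag of a decomposition of each half, so decompositions
of the two halves with cliques as bags can be joined by a tree edge. Thus the optimal bag size and
the optimal clique number agree.
-/

open SimpleGraph

section Walks

variable {V : Type*} {G : SimpleGraph V}

theorem isChordless_of_length_eq_dist {u v : V} {p : G.Walk u v} (hp : p.length = G.dist u v) :
    p.IsChordless := by
  have consecutive {i j : ℕ} (hij : i < j) (hj : j ≤ p.length)
      (hadj : G.Adj (p.getVert i) (p.getVert j)) :
      s(p.getVert i, p.getVert j) ∈ p.edges := by
    have hshort := dist_le ((p.take i).append (.cons hadj (p.drop j)))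
    simp only [Walk.length_append, Walk.length_cons, Walk.take_length, Walk.drop_length] at hshort
    obtain rfl : j = i + 1 := by omega
    exact Walk.adj_toSubgraph_iff_mem_edges.1 (p.toSubgraph_adj_getVert (by omega))
  refine Walk.isChordless_iff_forall_mem_edges.2 fun a b ha hb hab => ?_
  obtain ⟨i, rfl, hi⟩ := Walk.mem_support_iff_exists_getVert.1 ha
  obtain ⟨j, rfl, hj⟩ := Walk.mem_support_iff_exists_getVert.1 hb
  rcases lt_trichotomy i j with hij | rfl | hji
  · exact consecutive hij hj hab
  · exact (hab.ne rfl).elim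
  · exact Sym2.eq_swap ▸ consecutive hji hi hab.symm

theorem exists_isPath_isChordless_of_induce_connected {A : Set V} (hA : (G.induce A).Connected)
    {x y : V} (hx : x ∈ A) (hy : y ∈ A) :
    ∃ p : G.Walk x y, p.IsPath ∧ p.IsChordless ∧ ∀ z ∈ p.support, z ∈ A := by
  obtain ⟨q, hq, hql⟩ := hA.exists_path_of_dist ⟨x, hx⟩ ⟨y, hy⟩
  have hqc := Walk.isChordless_iff_forall_mem_edges.1 (isChordless_of_length_eq_dist hql)
  obtain ⟨p, hp, hsupport, hedges⟩ : ∃ p : G.Walk x y, p.IsPath ∧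
      p.support = q.support.map Subtype.val ∧ p.edges = q.edges.map (Sym2.map Subtype.val) :=
    ⟨q.map (Embedding.induce A).toHom, hq.map Subtype.val_injective, q.support_map _,
      q.edges_map _⟩
  refine ⟨p, hp, Walk.isChordless_iff_forall_mem_edges.2 fun a b ha hb hab => ?_, fun z hz => ?_⟩
  · obtain ⟨a, haq, rfl⟩ := List.mem_map.1 (hsupport ▸ ha)
    obtain ⟨b, hbq, rfl⟩ := List.mem_map.1 (hsupport ▸ hb)
    exact hedges ▸ List.mem_map_of_mem (hqc haq hbq hab)
  · obtain ⟨z, -, rfl⟩ := List.mem_map.1 (hsupport ▸ hz)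
    exact z.2

theorem isPath_append_of_forall_dist_le {r t i : V} {s : G.Walk r t} {q : G.Walk t i}
    (hs : s.length = G.dist r t) (hq : q.IsPath)
    (hfar : ∀ z ∈ q.support, G.dist r t ≤ G.dist r z) : (s.append q).IsPath := by
  classical
  rw [Walk.isPath_def, Walk.support_append]
  refine (s.isPath_of_length_eq_dist hs).support_nodup.append
    (hq.support_nodup.sublist (List.tail_sublist _)) fun z hzs hzq => ?_
  obtain rfl : z = t := by
    by_contra hzt
    have hlt := s.length_takeUntil_lt_length hzs hzt
    have hle := dist_le (s.takeUntil z hzs)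
    have hge := hfar z (List.mem_of_mem_tail hzq)
    omega
  have hnodup := hq.support_nodup
  rw [← Walk.cons_tail_support, List.nodup_cons] at hnodup
  exact hnodup.1 hzq

theorem isCycle_snd_penultimate_notMem_edges {u : V} {c : G.Walk u u} (hc : c.IsCycle)
    (hlen : 3 < c.length) : s(c.snd, c.penultimate) ∉ c.edges := by
  intro hmem
  have hadj : c.penultimate ∈ c.toSubgraph.neighborSet (c.getVert 1) :=
    Walk.adj_toSubgraph_iff_mem_edges.2 hmem
  rw [hc.neighborSet_toSubgraph_internal one_ne_zero (by omega)] at hadj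
  rcases hadj with h0 | h2
  · have := hc.getVert_injOn' (by simp) (by simp) h0
    omega
  · have := hc.getVert_injOn' (by simp) (by simp; omega) h2
    omega

end Walks

section Trees

variable {ι κ : Type*} {T : SimpleGraph ι}

theorem exists_root_of_induce_connected (hT : T.IsTree) (r : ι) {A : Set ι}
    (hA : (T.induce A).Connected) :
    ∃ t ∈ A, ∀ i ∈ A, ∀ p : T.Walk r i, p.IsPath →
      p.getVert (T.dist r t) = t ∧ ∀ n, T.dist r t ≤ n → p.getVert n ∈ A := by
  obtain ⟨t, htA, htmin⟩ :=
    (measure (T.dist r)).wf.has_min A (Set.nonempty_coe_sort.1 hA.nonempty)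
  refine ⟨t, htA, fun i hi p hp => ?_⟩
  obtain ⟨s, -, hs⟩ := hT.connected.exists_path_of_dist r t
  obtain ⟨q, hq, -, hqA⟩ := exists_isPath_isChordless_of_induce_connected hA htA hi
  have hsq : (s.append q).IsPath :=
    isPath_append_of_forall_dist_le hs hq fun z hz => not_lt.1 (htmin z (hqA z hz))
  obtain rfl : p = s.append q := (hT.existsUnique_path r i).unique hp hsq
  refine ⟨by simp [Walk.getVert_append, ← hs], fun n hn => ?_⟩
  rw [Walk.getVert_append, if_neg (by omega)]
  exact hqA _ (q.getVert_mem_support _)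

theorem exists_roots_of_induce_connected (hT : T.IsTree) {S : κ → Set ι}
    (hS : ∀ v, (T.induce (S v)).Connected) :
    ∃ (t : κ → ι) (h : κ → ℕ), ∀ u v, (S u ∩ S v).Nonempty → h v ≤ h u → t u ∈ S v := by
  obtain ⟨r⟩ := hT.connected.nonempty
  choose t _ ht using fun v => exists_root_of_induce_connected hT r (hS v)
  refine ⟨t, fun v => T.dist r (t v), fun u v ⟨i, hiu, hiv⟩ hle => ?_⟩
  obtain ⟨p, hp, -⟩ := hT.existsUnique_path r i
  rw [← (ht u i hiu p hp).1]
  exact (ht v i hiv p hp).2 _ hle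

theorem iInter_nonempty_of_induce_connected [Finite κ] (hT : T.IsTree) {S : κ → Set ι}
    (hS : ∀ v, (T.induce (S v)).Connected) (hmeet : ∀ u v, (S u ∩ S v).Nonempty) :
    (⋂ v, S v).Nonempty := by
  obtain ⟨t, h, hth⟩ := exists_roots_of_induce_connected hT hS
  cases isEmpty_or_nonempty κ
  · exact (Set.iInter_of_empty S).symm ▸ Set.nonempty_iff_univ_nonempty.1 hT.connected.nonempty
  · obtain ⟨u, hu⟩ := Finite.exists_max h
    exact ⟨t u, Set.mem_iInter.2 fun v => hth u v (hmeet u v) (hu v)⟩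

theorem not_isCycle_of_support_subset_range {G : SimpleGraph κ} (hT : T.IsAcyclic) (f : T ↪g G)
    {v : κ} {c : G.Walk v v} (hc : ∀ x ∈ c.support, x ∈ Set.range f) : ¬c.IsCycle := by
  intro hcycle
  refine f.isoInduceRange.isAcyclic_iff.1 hT (c.induce _ hc)
    ((Walk.isCycle_map_iff_of_injective (f := (Embedding.induce _).toHom)
      Subtype.val_injective).1 ?_)
  rwa [Walk.map_induce]

theorem isAcyclic_sum {T' : SimpleGraph κ} (hT : T.IsAcyclic) (hT' : T'.IsAcyclic) :
    (T ⊕g T').IsAcyclic := by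
  classical
  rintro (i | j) c
  · refine not_isCycle_of_support_subset_range hT Embedding.sumInl ?_
    rintro (x | y) hx
    · exact ⟨x, rfl⟩
    · exact (not_reachable_sum_inl_inr i y ⟨c.takeUntil _ hx⟩).elim
  · refine not_isCycle_of_support_subset_range hT' Embedding.sumInr ?_
    rintro (x | y) hx
    · exact (not_reachable_sum_inl_inr x j ⟨c.dropUntil _ hx⟩).elim
    · exact ⟨y, rfl⟩

theorem isTree_sum_sup_edge {T' : SimpleGraph κ} (hT : T.IsTree) (hT' : T'.IsTree) (i : ι)
    (j : κ) : ((T ⊕g T') ⊔ edge (.inl i) (.inr j)).IsTree where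
  connected := hT.connected.sum_sup_edge hT'.connected
  isAcyclic := (isAcyclic_sum hT.isAcyclic hT'.isAcyclic).sup_edge_of_not_reachable
    (not_reachable_sum_inl_inr i j)

theorem connected_induce_image {T' : SimpleGraph κ} (f : T →g T') {A : Set ι}
    (hA : (T.induce A).Connected) : (T'.induce (f '' A)).Connected :=
  hA.map (induceHom f (Set.mapsTo_image f A)) fun ⟨_, a, ha, hfa⟩ => ⟨⟨a, ha⟩, Subtype.ext hfa⟩

theorem connected_induce_sum_sup_edge {T' : SimpleGraph κ} {i : ι} {j : κ} {S : Set (ι ⊕ κ)}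
    (hS : S.Nonempty)
    (hl : (Sum.inl ⁻¹' S).Nonempty → (T.induce (Sum.inl ⁻¹' S)).Connected)
    (hr : (Sum.inr ⁻¹' S).Nonempty → (T'.induce (Sum.inr ⁻¹' S)).Connected)
    (hij : (Sum.inl ⁻¹' S).Nonempty → (Sum.inr ⁻¹' S).Nonempty → .inl i ∈ S ∧ .inr j ∈ S) :
    (((T ⊕g T') ⊔ edge (.inl i) (.inr j)).induce S).Connected := by
  have hl' (h : (Sum.inl ⁻¹' S).Nonempty) := connected_induce_image
    ((Hom.ofLE le_sup_left : _ →g (T ⊕g T') ⊔ edge (.inl i) (.inr j)).comp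
      Embedding.sumInl.toHom) (hl h)
  have hr' (h : (Sum.inr ⁻¹' S).Nonempty) := connected_induce_image
    ((Hom.ofLE le_sup_left : _ →g (T ⊕g T') ⊔ edge (.inl i) (.inr j)).comp
      Embedding.sumInr.toHom) (hr h)
  have hunion := Set.image_preimage_inl_union_image_preimage_inr S
  rcases (Sum.inl ⁻¹' S).eq_empty_or_nonempty with hle | hln
  · rw [hle, Set.image_empty, Set.empty_union] at hunion
    rw [← hunion]
    exact hr' (by rw [← hunion] at hS; exact hS.of_image)
  rcases (Sum.inr ⁻¹' S).eq_empty_or_nonempty with hre | hrn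
  · rw [hre, Set.image_empty, Set.union_empty] at hunion
    rw [← hunion]
    exact hl' hln
  · rw [← hunion]
    exact connected_induce_union (hl' hln).preconnected (hr' hrn).preconnected
      ⟨i, (hij hln hrn).1, rfl⟩ ⟨j, (hij hln hrn).2, rfl⟩ (by simp [edge_adj])

end Trees

section Fill

variable {V ι : Type} {G H : SimpleGraph V}

theorem isChordal_of_forall_isClique_lower_neighbors {α : Type*} [LinearOrder α] (h : V → α)
    (hH : ∀ u, H.IsClique {v | H.Adj u v ∧ h v ≤ h u}) : IsChordal H := by
  classical
  intro v c hc hlen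
  obtain ⟨u, hu, hmax⟩ := c.support.toFinset.exists_max_image h ⟨v, by simp⟩
  rw [List.mem_toFinset] at hu
  set d := c.rotate u hu with hd_def
  have hd : d.IsCycle := hc.rotate hu
  have hsupport {z : V} (hz : z ∈ d.support) : z ∈ c.support :=
    (c.mem_support_rotate_iff u hu).1 hz
  have hsnd : d.snd ∈ c.support := hsupport (d.getVert_mem_support _)
  have hpen : d.penultimate ∈ c.support := hsupport (d.getVert_mem_support _)
  refine ⟨d.snd, d.penultimate, hsnd, hpen, ?_, fun hmem => ?_⟩
  · exact hH u ⟨d.adj_snd hd.not_nil, hmax _ (List.mem_toFinset.2 hsnd)⟩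
      ⟨(d.adj_penultimate hd.not_nil).symm, hmax _ (List.mem_toFinset.2 hpen)⟩
      hd.snd_ne_penultimate
  · exact isCycle_snd_penultimate_notMem_edges hd (by rwa [hd_def, Walk.length_rotate])
      ((c.rotate_edges u hu).mem_iff.2 hmem)

namespace TreeDecomp

/-- A tree-decomposition of a graph is one of every subgraph. -/
def ofLE (td : TreeDecomp H ι) (hGH : G ≤ H) : TreeDecomp G ι where
  tree := td.tree
  isTree := td.isTree
  bag := td.bag
  bags_cover := td.bags_cover
  edges_covered _ _ huv := td.edges_covered (hGH huv)
  bags_connected := td.bags_connected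

theorem fill_adj (td : TreeDecomp G ι) {u v : V} :
    (fill G td).Adj u v ↔ u ≠ v ∧ ∃ i, u ∈ td.bag i ∧ v ∈ td.bag i := by
  simp only [fill, sup_adj, fromRel_adj]
  constructor
  · rintro (h | ⟨h, ⟨i, hu, hv⟩ | ⟨i, hv, hu⟩⟩)
    · exact ⟨h.ne, td.edges_covered h⟩
    · exact ⟨h, i, hu, hv⟩
    · exact ⟨h, i, hu, hv⟩
  · exact fun h => Or.inr ⟨h.1, Or.inl h.2⟩

/-- A tree-decomposition of `G`, as a tree-decomposition of the graph obtained by filling its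
bags. -/
def toFill (td : TreeDecomp G ι) : TreeDecomp (fill G td) ι where
  tree := td.tree
  isTree := td.isTree
  bag := td.bag
  bags_cover := td.bags_cover
  edges_covered _ _ huv := (td.fill_adj.1 huv).2
  bags_connected := td.bags_connected

theorem isChordal_of_isClique_bag (td : TreeDecomp G ι) (hbag : ∀ i, G.IsClique (td.bag i)) :
    IsChordal G := by
  obtain ⟨t, h, hth⟩ := exists_roots_of_induce_connected td.isTree td.bags_connected
  have root_mem {u v : V} (huv : G.Adj u v) (hle : h v ≤ h u) : v ∈ td.bag (t u) :=
    hth u v (td.edges_covered huv) hle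
  exact isChordal_of_forall_isClique_lower_neighbors h fun u => (hbag (t u)).subset
    fun v hv => root_mem hv.1 hv.2

theorem isChordal_fill (td : TreeDecomp G ι) : IsChordal (fill G td) :=
  td.toFill.isChordal_of_isClique_bag fun i _ hu _ hv huv => td.fill_adj.2 ⟨huv, i, hu, hv⟩

theorem exists_subset_bag_of_isClique (td : TreeDecomp G ι) {K : Set V} [Finite K]
    (hK : G.IsClique K) : ∃ i, K ⊆ td.bag i := by
  have hmeet (u v : K) : ({i | (u : V) ∈ td.bag i} ∩ {i | (v : V) ∈ td.bag i}).Nonempty := by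
    by_cases huv : (u : V) = v
    · rw [huv, Set.inter_self]
      exact td.bags_cover v
    · exact td.edges_covered (hK u.2 v.2 huv)
  obtain ⟨i, hi⟩ :=
    iInter_nonempty_of_induce_connected td.isTree (fun v : K => td.bags_connected v) hmeet
  exact ⟨i, fun v hv => Set.mem_iInter.1 hi ⟨v, hv⟩⟩

end TreeDecomp

end Fill

section Separators

variable {V : Type} {G H : SimpleGraph V}

theorem exists_isCompOf_of_notMem {S : Set V} {z : V} (hz : z ∉ S) :
    ∃ C, IsCompOf G S C ∧ z ∈ C := by
  let F : Set (Set V) := {D | z ∈ D ∧ Disjoint D S ∧ (G.induce D).Connected}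
  have hsingleton : {z} ∈ F := ⟨rfl, Set.disjoint_singleton_left.2 hz, .of_subsingleton⟩
  have hzF : z ∈ ⋃₀ F := ⟨{z}, hsingleton, rfl⟩
  refine ⟨⋃₀ F, ⟨⟨z, hzF⟩, Set.disjoint_sUnion_left.2 fun D hD => hD.2.1, ?_, ?_⟩, hzF⟩
  · exact induce_sUnion_connected_of_pairwise_not_disjoint ⟨{z}, hsingleton⟩
      (fun hD hE => ⟨z, hD.1, hE.1⟩) fun hD => hD.2.2
  · intro D hFD hDS hD
    have hDF : D ∈ F := ⟨hFD hzF, hDS, hD⟩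
    exact (Set.subset_sUnion_of_mem hDF).antisymm hFD

theorem IsCompOf.nbhd_subset {S C : Set V} (hC : IsCompOf G S C) : nbhd G C ⊆ S := by
  obtain ⟨-, hCS, hconn, hmax⟩ := hC
  rintro x ⟨hxC, c, hc, hcx⟩
  by_contra hxS
  have hCx : (G.induce (C ∪ {x})).Connected :=
    connected_induce_union hconn.preconnected .of_subsingleton hc rfl hcx
  have hdisj : Disjoint (C ∪ {x}) S := Set.disjoint_union_left.2 ⟨hCS, by simpa using hxS⟩
  exact hxC (hmax _ Set.subset_union_left hdisj hCx ▸ Or.inr rfl)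

namespace IsChordal

theorem induce (hH : IsChordal H) (A : Set V) : IsChordal (H.induce A) := by
  intro v c hc hlen
  obtain ⟨u, w, hu, hw, huw, hchord⟩ := hH (c.map (Embedding.induce A).toHom)
    (hc.map Subtype.val_injective) (by rwa [Walk.length_map])
  rw [Walk.support_map] at hu hw
  obtain ⟨u, huc, rfl⟩ := List.mem_map.1 hu
  obtain ⟨w, hwc, rfl⟩ := List.mem_map.1 hw
  refine ⟨u, w, huc, hwc, huw, fun h => hchord ?_⟩
  rw [Walk.edges_map]
  exact List.mem_map_of_mem h

theorem length_le_one_of_isChordless (hH : IsChordal H) {v x y : V} {p : H.Walk x y}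
    (hp : p.IsPath) (hchordless : p.IsChordless) (hxy : x ≠ y) (hvx : H.Adj v x)
    (hvy : H.Adj v y) (hv : v ∉ p.support) (hends : ∀ z ∈ p.support, H.Adj v z → z = x ∨ z = y) :
    p.length ≤ 1 := by
  by_contra! hlen
  have hcycle : (Walk.cons hvx (p.concat hvy.symm)).IsCycle := by
    refine Walk.cons_isCycle_iff _ _ |>.2 ⟨hp.concat hv hvy.symm, ?_⟩
    rw [Walk.edges_concat, List.concat_eq_append, List.mem_append, List.mem_singleton]
    rintro (h | h)
    · exact hv (p.fst_mem_support_of_mem_edges h)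
    · rcases Sym2.eq_iff.1 h with ⟨h, -⟩ | ⟨-, h⟩
      · exact hvy.ne h
      · exact hxy h
  obtain ⟨a, b, ha, hb, hab, hchord⟩ := hH _ hcycle (by
    simp only [Walk.length_cons, Walk.length_concat]
    omega)
  simp only [Walk.support_cons, Walk.support_concat, Walk.edges_cons, Walk.edges_concat,
    List.mem_cons, List.concat_eq_append, List.mem_append, List.not_mem_nil, or_false,
    not_or] at ha hb hchord
  obtain ⟨hvx_ne, hp_ne, hyv_ne⟩ := hchord
  have not_adj_v {z : V} (hz : z ∈ p.support) (hvz : H.Adj v z) (hx : s(v, z) ≠ s(v, x))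
      (hy : s(v, z) ≠ s(y, v)) : False := by
    rcases hends z hz hvz with rfl | rfl
    · exact hx rfl
    · exact hy Sym2.eq_swap
  have hmem {z : V} (hz : z = v ∨ z ∈ p.support ∨ z = v) : z ≠ v → z ∈ p.support := by tauto
  by_cases hav : a = v
  · subst hav
    exact not_adj_v (hmem hb hab.ne') hab hvx_ne hyv_ne
  by_cases hbv : b = v
  · subst hbv
    rw [Sym2.eq_swap] at hvx_ne hyv_ne
    exact not_adj_v (hmem ha hav) hab.symm hvx_ne hyv_ne
  exact hp_ne (hchordless.mem_edges (hmem ha hav) (hmem hb hbv) hab)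

theorem isClique_nbhd (hH : IsChordal H) {v : V} {C : Set V} (hC : (H.induce C).Connected)
    (hv : v ∉ C) (hN : nbhd H C ⊆ H.neighborSet v) : H.IsClique (nbhd H C) := by
  have hvC {c : V} (hc : c ∈ C) : ¬H.Adj v c := fun hvc =>
    (hN ⟨hv, c, hc, hvc.symm⟩).ne rfl
  intro x hx y hy hxy
  obtain ⟨c, hc, hcx⟩ := hx.2
  obtain ⟨d, hd, hdy⟩ := hy.2
  have hCx : (H.induce (C ∪ {x})).Connected :=
    connected_induce_union hC.preconnected .of_subsingleton hc rfl hcx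
  have hCxy : (H.induce (C ∪ {x} ∪ {y})).Connected :=
    connected_induce_union hCx.preconnected .of_subsingleton (Or.inl hd) rfl hdy
  obtain ⟨p, hp, hchordless, hsupport⟩ := exists_isPath_isChordless_of_induce_connected hCxy
    (Or.inl (Or.inr rfl)) (Or.inr rfl)
  refine p.adj_of_length_eq_one (le_antisymm ?_ ?_)
  · refine hH.length_le_one_of_isChordless hp hchordless hxy (hN hx) (hN hy) (fun hvp => ?_)
      fun z hz hvz => ?_
    · rcases hsupport v hvp with (hvC | rfl) | rfl
      · exact hv hvC
      · exact (hN hx).ne rfl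
      · exact (hN hy).ne rfl
    · rcases hsupport z hz with (hzC | rfl) | rfl
      · exact (hvC hzC hvz).elim
      · exact Or.inl rfl
      · exact Or.inr rfl
  · exact Nat.one_le_iff_ne_zero.2 fun h => hxy (Walk.eq_of_length_eq_zero h)

theorem exists_isClique_separation (hH : IsChordal H) {v z : V} (hvz : v ≠ z)
    (hadj : ¬H.Adj v z) :
    ∃ A B : Set V, v ∉ A ∧ z ∉ B ∧ H.IsClique (A ∩ B) ∧
      (∀ u, u ∈ A ∨ u ∈ B) ∧ ∀ ⦃u w⦄, H.Adj u w → u ∈ A ∧ w ∈ A ∨ u ∈ B ∧ w ∈ B := by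
  obtain ⟨C, hC, hzC⟩ := exists_isCompOf_of_notMem (G := H) (S := insert v (H.neighborSet v))
    (z := z) (by simp [hvz.symm, hadj])
  have hvC : v ∉ C := fun h => hC.2.1.notMem_of_mem_left h (Set.mem_insert _ _)
  have hvN : v ∉ nbhd H C := fun ⟨_, c, hc, hcv⟩ =>
    hC.2.1.notMem_of_mem_left hc (Or.inr hcv.symm)
  have hN : nbhd H C ⊆ H.neighborSet v := fun x hx =>
    (hC.nbhd_subset hx).resolve_left fun hxv => hvN (hxv ▸ hx)
  have hinter : (C ∪ nbhd H C) ∩ Cᶜ ⊆ nbhd H C := fun x hx => hx.1.resolve_left hx.2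
  refine ⟨C ∪ nbhd H C, Cᶜ, fun h => h.elim hvC hvN, fun h => h hzC,
    (hH.isClique_nbhd hC.2.2.1 hvC hN).subset hinter, fun u => ?_, fun u w huw => ?_⟩
  · exact (Classical.em (u ∈ C)).imp Or.inl id
  · by_cases hu : u ∈ C <;> by_cases hw : w ∈ C
    · exact Or.inl ⟨Or.inl hu, Or.inl hw⟩
    · exact Or.inl ⟨Or.inl hu, Or.inr ⟨hw, u, hu, huw⟩⟩
    · exact Or.inl ⟨Or.inr ⟨hu, w, hw, huw.symm⟩, Or.inl hw⟩
    · exact Or.inr ⟨hu, hw⟩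

end IsChordal

end Separators

section CliqueTree

variable {V ι κ : Type} {G H : SimpleGraph V}

namespace TreeDecomp

/-- The tree-decomposition with a single bag, containing all vertices. -/
def single [Fintype V] (G : SimpleGraph V) : TreeDecomp G Unit where
  tree := ⊥
  isTree := .of_subsingleton
  bag _ := Finset.univ
  bags_cover v := ⟨(), Finset.mem_univ v⟩
  edges_covered u v _ := ⟨(), Finset.mem_univ u, Finset.mem_univ v⟩
  bags_connected v :=
    have : Nonempty {_i : Unit | v ∈ Finset.univ} := ⟨(), Finset.mem_univ v⟩
    .of_subsingleton

theorem connected_setOf_mem_map_bag {A : Set V} (td : TreeDecomp (G.induce A) ι) {v : V}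
    (hv : v ∈ A) :
    (td.tree.induce {i | v ∈ (td.bag i).map (.subtype (· ∈ A))}).Connected := by
  have hset : {i | v ∈ (td.bag i).map (.subtype (· ∈ A))} = {i | ⟨v, hv⟩ ∈ td.bag i} := by
    ext i
    simp [hv]
  exact hset ▸ td.bags_connected ⟨v, hv⟩

/-- The bags of tree-decompositions of two induced subgraphs, as sets of vertices of `G`: the bag
family of `TreeDecomp.glue`. -/
def glueBag {A B : Set V} (tdA : TreeDecomp (G.induce A) ι) (tdB : TreeDecomp (G.induce B) κ) :
    ι ⊕ κ → Finset V :=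
  Sum.elim (fun i => (tdA.bag i).map (.subtype (· ∈ A)))
    (fun j => (tdB.bag j).map (.subtype (· ∈ B)))

theorem exists_mem_glueBag {A B : Set V} (tdA : TreeDecomp (G.induce A) ι)
    (tdB : TreeDecomp (G.induce B) κ) {v : V} (hv : v ∈ A ∨ v ∈ B) :
    ∃ k, v ∈ tdA.glueBag tdB k := by
  rcases hv with hv | hv
  · obtain ⟨k, hk⟩ := (tdA.connected_setOf_mem_map_bag hv).nonempty
    exact ⟨.inl k, hk⟩
  · obtain ⟨k, hk⟩ := (tdB.connected_setOf_mem_map_bag hv).nonempty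
    exact ⟨.inr k, hk⟩

/-- Tree-decompositions of two induced subgraphs that together make up `G`, joined by an edge
between a node of each whose bag contains all the common vertices. -/
def glue {A B : Set V} (tdA : TreeDecomp (G.induce A) ι) (tdB : TreeDecomp (G.induce B) κ)
    {i : ι} {j : κ} (hi : Subtype.val ⁻¹' B ⊆ (tdA.bag i : Set A))
    (hj : Subtype.val ⁻¹' A ⊆ (tdB.bag j : Set B)) (hcover : ∀ u, u ∈ A ∨ u ∈ B)
    (hedge : ∀ ⦃u w⦄, G.Adj u w → u ∈ A ∧ w ∈ A ∨ u ∈ B ∧ w ∈ B) : TreeDecomp G (ι ⊕ κ) where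
  tree := (tdA.tree ⊕g tdB.tree) ⊔ edge (.inl i) (.inr j)
  isTree := isTree_sum_sup_edge tdA.isTree tdB.isTree i j
  bag := tdA.glueBag tdB
  bags_cover v := tdA.exists_mem_glueBag tdB (hcover v)
  edges_covered u v huv := by
    rcases hedge huv with ⟨hu, hv⟩ | ⟨hu, hv⟩
    · obtain ⟨k, hk⟩ := tdA.edges_covered (u := ⟨u, hu⟩) (v := ⟨v, hv⟩) huv
      exact ⟨.inl k, by simpa [glueBag, hu, hv] using hk⟩
    · obtain ⟨k, hk⟩ := tdB.edges_covered (u := ⟨u, hu⟩) (v := ⟨v, hv⟩) huv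
      exact ⟨.inr k, by simpa [glueBag, hu, hv] using hk⟩
  bags_connected v := by
    refine connected_induce_sum_sup_edge (tdA.exists_mem_glueBag tdB (hcover v)) ?_ ?_ ?_
    · rintro ⟨k, hk⟩
      exact tdA.connected_setOf_mem_map_bag (Finset.property_of_mem_map_subtype _ hk)
    · rintro ⟨k, hk⟩
      exact tdB.connected_setOf_mem_map_bag (Finset.property_of_mem_map_subtype _ hk)
    · rintro ⟨k, hk⟩ ⟨l, hl⟩
      have hvA : v ∈ A := Finset.property_of_mem_map_subtype _ hk
      have hvB : v ∈ B := Finset.property_of_mem_map_subtype _ hl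
      exact ⟨Finset.mem_map.2 ⟨⟨v, hvA⟩, hi hvB, rfl⟩, Finset.mem_map.2 ⟨⟨v, hvB⟩, hj hvA, rfl⟩⟩

end TreeDecomp

theorem IsChordal.exists_treeDecomp_isClique_bag [Finite V] (hH : IsChordal H) :
    ∃ (ι : Type) (td : TreeDecomp H ι), ∀ i, H.IsClique (td.bag i) := by
  induction hn : Nat.card V using Nat.strong_induction_on generalizing V with
  | h n ih
  subst hn
  have := Fintype.ofFinite V
  by_cases hcomplete : H.IsClique Set.univ
  · exact ⟨Unit, .single H, fun _ => hcomplete.subset (Set.subset_univ _)⟩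
  obtain ⟨v, z, hvz, hadj⟩ : ∃ v z, v ≠ z ∧ ¬H.Adj v z := by
    simpa [SimpleGraph.IsClique, Set.Pairwise] using hcomplete
  obtain ⟨A, B, hvA, hzB, hclique, hcover, hedge⟩ := hH.exists_isClique_separation hvz hadj
  obtain ⟨ι, tdA, hA⟩ :=
    ih (Nat.card A) (Set.ncard_lt_card fun h => hvA (h ▸ trivial)) (hH.induce A) rfl
  obtain ⟨κ, tdB, hB⟩ :=
    ih (Nat.card B) (Set.ncard_lt_card fun h => hzB (h ▸ trivial)) (hH.induce B) rfl
  obtain ⟨i, hi⟩ := tdA.exists_subset_bag_of_isClique (K := Subtype.val ⁻¹' B)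
    fun x hx y hy hxy => hclique ⟨x.2, hx⟩ ⟨y.2, hy⟩ (Subtype.coe_ne_coe.2 hxy)
  obtain ⟨j, hj⟩ := tdB.exists_subset_bag_of_isClique (K := Subtype.val ⁻¹' A)
    fun x hx y hy hxy => hclique ⟨hx, x.2⟩ ⟨hy, y.2⟩ (Subtype.coe_ne_coe.2 hxy)
  refine ⟨ι ⊕ κ, .glue tdA tdB hi hj hcover hedge, ?_⟩
  rintro (k | k)
  · exact Finset.coe_map _ _ ▸ isClique_induce_iff.1 (hA k)
  · exact Finset.coe_map _ _ ▸ isClique_induce_iff.1 (hB k)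

end CliqueTree

section Treewidth

variable {V : Type} {G H : SimpleGraph V}

theorem IsTriangulationOf.exists_minimal_le [Finite V] (hH : IsTriangulationOf H G) :
    ∃ H' ≤ H, IsMinimalTriangulationOf H' G := by
  obtain ⟨H', hle, hmin⟩ := exists_minimal_le_of_wellFoundedLT (IsTriangulationOf · G) H hH
  exact ⟨H', hle, hmin.prop, fun K hK hKH => hmin.eq_of_le hK hKH⟩

theorem exists_treeDecomp_card_bag_le_iff [Finite V] {n : ℕ} :
    (∃ (ι : Type) (td : TreeDecomp G ι), ∀ i, (td.bag i).card ≤ n) ↔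
      ∃ H, IsMinimalTriangulationOf H G ∧ H.cliqueNum ≤ n := by
  constructor
  · rintro ⟨ι, td, htd⟩
    obtain ⟨H, hle, hH⟩ := IsTriangulationOf.exists_minimal_le ⟨td.isChordal_fill, le_sup_left⟩
    obtain ⟨K, hK⟩ := H.exists_isNClique_cliqueNum
    obtain ⟨i, hi⟩ := td.toFill.exists_subset_bag_of_isClique (hK.isClique.mono hle)
    exact ⟨H, hH, hK.card_eq ▸ (Finset.card_le_card hi).trans (htd i)⟩
  · rintro ⟨H, ⟨⟨hchordal, hGH⟩, -⟩, hn⟩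
    obtain ⟨ι, td, htd⟩ := hchordal.exists_treeDecomp_isClique_bag
    exact ⟨ι, td.ofLE hGH, fun i => (IsClique.card_le_cliqueNum (tc := htd i)).trans hn⟩

theorem cliqueNum_eq_zero_iff {α : Type*} [Finite α] {G : SimpleGraph α} :
    G.cliqueNum = 0 ↔ IsEmpty α := by
  refine ⟨fun h => ⟨fun v => ?_⟩, fun _ => ?_⟩
  · have hv : ({v} : Finset α).card ≤ G.cliqueNum := IsClique.card_le_cliqueNum (tc := by simp)
    rw [h, Finset.card_singleton] at hv
    exact absurd hv (by decide)
  · obtain ⟨K, hK⟩ := G.exists_isNClique_cliqueNum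
    rw [← hK.card_eq, K.eq_empty_of_isEmpty, Finset.card_empty]

theorem sInf_exists_le_add_one_eq_sInf_exists_eq_add_one {α : Type*} {P : α → Prop} {f : α → ℕ}
    (hf : ∀ a b, P a → P b → f a = 0 → f b = 0) :
    sInf {k | ∃ a, P a ∧ f a ≤ k + 1} = sInf {k | ∃ a, P a ∧ f a = k + 1} := by
  by_cases hzero : ∃ a, P a ∧ f a = 0
  -- Both infima are `0` here, the right-hand one because `sInf ∅ = 0`.
  · obtain ⟨a, ha, hfa⟩ := hzero
    have hempty : {k | ∃ b, P b ∧ f b = k + 1} = ∅ :=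
      Set.eq_empty_of_forall_notMem fun k ⟨b, hb, hfb⟩ => by simp [hf a b ha hb hfa] at hfb
    rw [hempty, Nat.sInf_empty]
    exact Nat.sInf_eq_zero.2 (Or.inl ⟨a, ha, by omega⟩)
  have attained {k : ℕ} (hk : ∃ a, P a ∧ f a ≤ k + 1) : ∃ l ≤ k, ∃ a, P a ∧ f a = l + 1 := by
    obtain ⟨a, ha, hfa⟩ := hk
    have hpos : f a ≠ 0 := fun h => hzero ⟨a, ha, h⟩
    exact ⟨f a - 1, by omega, a, ha, by omega⟩
  have hsubset : {k | ∃ a, P a ∧ f a = k + 1} ⊆ {k | ∃ a, P a ∧ f a ≤ k + 1} :=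
    fun k ⟨a, ha, hfa⟩ => ⟨a, ha, hfa.le⟩
  rcases {k | ∃ a, P a ∧ f a ≤ k + 1}.eq_empty_or_nonempty with hempty | hne
  · rw [Set.subset_eq_empty hsubset hempty, hempty]
  · obtain ⟨l, hl, hattained⟩ := attained (Nat.sInf_mem hne)
    exact le_antisymm (csInf_le_csInf' ⟨l, hattained⟩ hsubset)
      ((Nat.sInf_le hattained).trans hl)

end Treewidth

/-- `tw(G)` is the smallest `k` such that `G` has a minimal
triangulation with clique number `k + 1`. -/
theorem treewidth_eq_min_over_minimal_triangulations {V : Type} [Fintype V]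
    (G : SimpleGraph V) :
    treewidth G = sInf {k : ℕ | ∃ H : SimpleGraph V,
      IsMinimalTriangulationOf H G ∧ H.cliqueNum = k + 1} := by
  simp_rw [treewidth, exists_treeDecomp_card_bag_le_iff]
  exact sInf_exists_le_add_one_eq_sInf_exists_eq_add_one fun _ _ _ _ hzero =>
    cliqueNum_eq_zero_iff.2 (cliqueNum_eq_zero_iff.1 hzero)
end
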